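/- Let $U=\{1,\dots,n\}$ be a set of items, where item $a$ has utility $u_a\in\mathbb R$ and consideration probability $p_a\in(0,1]$, and let $1\le \ell\le k\le n$ with $\ell<n$. A length-$k$ ranking is a tuple $r=(r_1,\dots,r_k)$ of distinct items. For $C\subseteq U$ put $$\Pr\nolimits_{PL}(r\mid C)=\prod_{s=1}^{k}\frac{\exp(u_{r_s})}{\sum_{b\in C\setminus\{r_1,\dots,r_{s-1}\}}\exp(u_b)}\quad\text{if }\{r_1,\dots,r_k\}\subseteq C,$$ and $\Pr_{PL}(r\mid C)=0$ otherwise. Let $w(C)=\prod_{a\in C}p_a\prod_{b\in U\setminus C}(1-p_b)$, let $\Pr_C(C)=w(C)\big/\sum_{D\subseteq U,\,|D|\ge k}w(D)$ if $|C|\ge k$, and $\Pr_C(C)=0$ if $|C|<k$. The Plackett–Luce with consideration (PL+C) probability of $r$ is $\Pr_{PL+C}(r)=\sum_{C\subseteq U}\Pr_C(C)\Pr_{PL}(r\mid C)$, and $\Pr_{PL+C}(R)=\sum_{r\in R}\Pr_{PL+C}(r)$ for a set $R$ of rankings. Let $R_{i\le\ell}$ be the set of length-$k$ rankings with item $i$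 in one of the top $\ell$ positions. Let $i,j\in U$ be items with $u_i>u_j$. If $$c=\frac{\Pr_{PL+C}(R_{i\le\ell})}{\Pr_{PL+C}(R_{j\le\ell})}\le 1,$$ then $$p_i(1-p_j)\le c\,p_j(1-p_i),$$ that is, $\dfrac{p_i}{1-p_i}\le c\cdot\dfrac{p_j}{1-p_j}$, where $x/0=+\infty$ for $x>0$. -/

import Mathlib

noncomputable section

/-- Unnormalized weight of a consideration set `C`: each item `i ∈ C` is considered
(probability `p i`), each item `j ∉ C` is not (probability `1 - p j`). -/
def considerWeight (n : ℕ) (p : Fin n → ℝ) (C : Finset (Fin n)) : ℝ :=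
  (∏ i ∈ C, p i) * ∏ j ∈ Cᶜ, (1 - p j)

/-- Normalizing constant `z_{k,p}`: total weight of the consideration sets of size at least `k`. -/
def zConst (n k : ℕ) (p : Fin n → ℝ) : ℝ :=
  ∑ C ∈ Finset.univ.filter (fun C : Finset (Fin n) => k ≤ C.card), considerWeight n p C

/-- Probability of the consideration set `C`, conditioned on `k ≤ |C|`. -/
def prC (n k : ℕ) (p : Fin n → ℝ) (C : Finset (Fin n)) : ℝ :=
  if k ≤ C.card then considerWeight n p C / zConst n k p else 0

/-- Plackett–Luce probability of the length-`k` ranking `r` given the consideration set `C`.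
A ranking is an injective map from positions (counted from `0`) to items. -/
def prPL (n k : ℕ) (u : Fin n → ℝ) (r : Fin k ↪ Fin n) (C : Finset (Fin n)) : ℝ :=
  if ∀ t : Fin k, r t ∈ C then
    ∏ t : Fin k, Real.exp (u (r t)) /
      ∑ j ∈ C \ (Finset.Iio t).image r, Real.exp (u j)
  else 0

/-- Plackett–Luce-with-consideration (PL+C) probability of the ranking `r`. -/
def prPLC (n k : ℕ) (u p : Fin n → ℝ) (r : Fin k ↪ Fin n) : ℝ :=
  ∑ C : Finset (Fin n), prC n k p C * prPL n k u r C

/-- PL+C probability of a set of rankings. -/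
def prPLCset (n k : ℕ) (u p : Fin n → ℝ) (R : Finset (Fin k ↪ Fin n)) : ℝ :=
  ∑ r ∈ R, prPLC n k u p r

/-- `R_{i≤ℓ}`: the length-`k` rankings with item `i` in one of the top `ℓ` positions. -/
def topSet (n k : ℕ) (i : Fin n) (ℓ : ℕ) : Finset (Fin k ↪ Fin n) :=
  Finset.univ.filter (fun r => ∃ t : Fin k, (t : ℕ) < ℓ ∧ r t = i)

end

noncomputable section

/-- Total Plackett–Luce weight of the items in `C`. -/
def expSum {n : ℕ} (u : Fin n → ℝ) (C : Finset (Fin n)) : ℝ :=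
  ∑ b ∈ C, Real.exp (u b)

/-- Plackett–Luce probability that `i` is not among the first `ℓ` picks from `C`,
computed recursively on the first pick. -/
def missProb {n : ℕ} (u : Fin n → ℝ) (i : Fin n) : ℕ → Finset (Fin n) → ℝ
  | 0, _ => 1
  | ℓ + 1, C => ∑ a ∈ C.erase i, Real.exp (u a) / expSum u C * missProb u i ℓ (C.erase a)

/-- Plackett–Luce probability, given `C`, that `i` is in one of the top `ℓ` positions. -/
def hitProb (n k : ℕ) (u : Fin n → ℝ) (i : Fin n) (ℓ : ℕ) (C : Finset (Fin n)) : ℝ :=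
  ∑ r ∈ topSet n k i ℓ, prPL n k u r C

end

/-- The ranking left after removing the first item. -/
def tailRanking {n k : ℕ} (r : Fin (k + 1) ↪ Fin n) : Fin k ↪ Fin n :=
  (Fin.succEmb k).trans r

theorem tailRanking_apply {n k : ℕ} (r : Fin (k + 1) ↪ Fin n) (t : Fin k) :
    tailRanking r t = r t.succ := rfl

theorem expSum_pos {n : ℕ} (u : Fin n → ℝ) {C : Finset (Fin n)} (hC : C.Nonempty) :
    0 < expSum u C :=
  Finset.sum_pos (fun _ _ => Real.exp_pos _) hC

theorem expSum_nonneg {n : ℕ} (u : Fin n → ℝ) (C : Finset (Fin n)) : 0 ≤ expSum u C :=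
  Finset.sum_nonneg fun _ _ => (Real.exp_pos _).le

theorem prPL_nonneg {n k : ℕ} (u : Fin n → ℝ) (r : Fin k ↪ Fin n) (C : Finset (Fin n)) :
    0 ≤ prPL n k u r C := by
  unfold prPL
  split_ifs
  · exact Finset.prod_nonneg fun t _ =>
      div_nonneg (Real.exp_pos _).le (expSum_nonneg u _)
  · exact le_rfl

theorem prPL_succ {n k : ℕ} (u : Fin n → ℝ) (r : Fin (k + 1) ↪ Fin n) (C : Finset (Fin n)) :
    prPL n (k + 1) u r C = if r 0 ∈ C then
      Real.exp (u (r 0)) / expSum u C * prPL n k u (tailRanking r) (C.erase (r 0)) else 0 := by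
  have hiff : (∀ t, r t ∈ C) ↔ r 0 ∈ C ∧ ∀ t, tailRanking r t ∈ C.erase (r 0) := by
    rw [Fin.forall_fin_succ]
    refine and_congr_right fun _ => forall_congr' fun t => ?_
    simp [tailRanking_apply]
  have himg : ∀ t : Fin k, C \ (Finset.Iio t.succ).image r =
      C.erase (r 0) \ (Finset.Iio t).image (tailRanking r) := by
    intro t
    ext b
    simp only [Finset.mem_sdiff, Finset.mem_image, Finset.mem_Iio, Finset.mem_erase,
      tailRanking_apply, not_exists, not_and, Fin.forall_fin_succ (n := k), Fin.succ_lt_succ_iff,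
      Fin.succ_pos, true_implies]
    constructor
    · rintro ⟨h1, h2, h3⟩
      exact ⟨⟨fun h => h2 h.symm, h1⟩, h3⟩
    · rintro ⟨⟨h2, h1⟩, h3⟩
      exact ⟨h1, fun h => h2 h.symm, h3⟩
  have hzero : C \ (Finset.Iio (0 : Fin (k + 1))).image r = C := by
    ext b; simp
  unfold prPL
  simp only [hiff]
  by_cases h0 : r 0 ∈ C
  · by_cases h1 : ∀ t, tailRanking r t ∈ C.erase (r 0)
    · rw [if_pos ⟨h0, h1⟩, if_pos h0, if_pos h1, Fin.prod_univ_succ, hzero]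
      congr 1
      refine Finset.prod_congr rfl fun t _ => ?_
      rw [himg]; rfl
    · rw [if_neg fun h => h1 h.2, if_pos h0, if_neg h1, mul_zero]
  · rw [if_neg fun h => h0 h.1, if_neg h0]

theorem prPL_eq_zero {n k : ℕ} (u : Fin n → ℝ) (r : Fin k ↪ Fin n) {C : Finset (Fin n)}
    {t : Fin k} (h : r t ∉ C) : prPL n k u r C = 0 :=
  if_neg fun h' => h (h' t)

/-- Summing over rankings is summing over the first item and the remaining ranking, provided the
summand vanishes when the first item recurs. -/
theorem sum_ranking_succ {n k : ℕ} (F : Fin n → (Fin k ↪ Fin n) → ℝ)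
    (hF : ∀ a r, (∃ t, r t = a) → F a r = 0) :
    ∑ r : Fin (k + 1) ↪ Fin n, F (r 0) (tailRanking r) = ∑ a, ∑ r, F a r := by
  rw [← Fintype.sum_prod_type']
  refine Finset.sum_of_injOn (fun r => (r 0, tailRanking r)) ?_ (by simp) ?_ (fun _ _ => rfl)
  · intro r _ s _ h
    obtain ⟨h0, h1⟩ := Prod.mk.inj h
    ext t
    refine Fin.cases ?_ (fun t => ?_) t
    · rw [h0]
    · rw [← tailRanking_apply, h1, tailRanking_apply]
  · rintro ⟨a, r⟩ _ h
    apply hF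
    by_contra hne
    push Not at hne
    refine h ⟨⟨Fin.cons a r, ?_⟩, by simp, ?_⟩
    · rw [Fin.cons_injective_iff]
      exact ⟨fun ⟨t, ht⟩ => hne t ht, r.injective⟩
    · refine Prod.ext rfl ?_
      ext t
      rfl

theorem mem_topSet {n k : ℕ} {i : Fin n} {ℓ : ℕ} {r : Fin k ↪ Fin n} :
    r ∈ topSet n k i ℓ ↔ ∃ t : Fin k, (t : ℕ) < ℓ ∧ r t = i := by
  simp [topSet]

theorem mem_topSet_succ {n k : ℕ} {i : Fin n} {ℓ : ℕ} {r : Fin (k + 1) ↪ Fin n} :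
    r ∈ topSet n (k + 1) i (ℓ + 1) ↔ r 0 = i ∨ tailRanking r ∈ topSet n k i ℓ := by
  simp [mem_topSet, Fin.exists_fin_succ, tailRanking_apply]

theorem topSet_zero (n k : ℕ) (i : Fin n) : topSet n k i 0 = ∅ := by
  ext r; simp [mem_topSet]

theorem sum_prPL_succ {n k : ℕ} (u : Fin n → ℝ) (C : Finset (Fin n))
    (T : Finset (Fin (k + 1) ↪ Fin n)) (A : Finset (Fin n)) (T' : Finset (Fin k ↪ Fin n))
    (hA : A ⊆ C) (hT : ∀ r, r 0 ∈ C → (r ∈ T ↔ r 0 ∈ A ∧ tailRanking r ∈ T')) :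
    ∑ r ∈ T, prPL n (k + 1) u r C =
      ∑ a ∈ A, Real.exp (u a) / expSum u C * ∑ r ∈ T', prPL n k u r (C.erase a) := by
  let F : Fin n → (Fin k ↪ Fin n) → ℝ := fun a r =>
    if a ∈ A then if r ∈ T' then
      Real.exp (u a) / expSum u C * prPL n k u r (C.erase a) else 0 else 0
  have hF : ∀ a r, (∃ t, r t = a) → F a r = 0 := by
    rintro a r ⟨t, ht⟩
    have : prPL n k u r (C.erase a) = 0 := prPL_eq_zero u r (t := t) (by simp [ht])
    simp [F, this]
  have hleft : ∑ r ∈ T, prPL n (k + 1) u r C =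
      ∑ r : Fin (k + 1) ↪ Fin n, F (r 0) (tailRanking r) := by
    rw [← Finset.univ_inter T, ← Finset.sum_ite_mem]
    refine Finset.sum_congr rfl fun r _ => ?_
    simp only [F, prPL_succ]
    by_cases h0 : r 0 ∈ C
    · simp only [hT r h0, if_pos h0, ite_and]
    · rw [if_neg h0, if_neg fun h => h0 (hA h), ite_self]
  rw [hleft, sum_ranking_succ F hF, ← Finset.univ_inter A, ← Finset.sum_ite_mem]
  refine Finset.sum_congr rfl fun a _ => ?_
  by_cases ha : a ∈ A
  · simp only [F, if_pos ha]
    rw [Finset.sum_ite_mem, Finset.univ_inter, Finset.mul_sum]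
  · simp only [F, if_neg ha, Finset.sum_const_zero]

theorem sum_exp_div_expSum {n : ℕ} (u : Fin n → ℝ) {C : Finset (Fin n)} (hC : C.Nonempty) :
    ∑ a ∈ C, Real.exp (u a) / expSum u C = 1 := by
  rw [← Finset.sum_div]
  exact div_self (expSum_pos u hC).ne'

/-- Rankings whose top `ℓ` positions miss `i` have total Plackett–Luce probability `missProb`. -/
theorem sum_compl_topSet {n : ℕ} (u : Fin n → ℝ) (i : Fin n) (k ℓ : ℕ) (C : Finset (Fin n))
    (hℓ : ℓ ≤ k) (hC : k ≤ C.card) :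
    ∑ r ∈ (topSet n k i ℓ)ᶜ, prPL n k u r C = missProb u i ℓ C := by
  induction k generalizing ℓ C with
  | zero =>
    obtain rfl : ℓ = 0 := by omega
    simp [topSet_zero, missProb, prPL]
  | succ k ih =>
    have hcard : ∀ a ∈ C, k ≤ (C.erase a).card := fun a ha => by
      rw [Finset.card_erase_of_mem ha]; omega
    cases ℓ with
    | zero =>
      rw [sum_prPL_succ u C _ C (topSet n k i 0)ᶜ subset_rfl
        (by intro r hr; simp [topSet_zero, hr]), missProb,
        ← sum_exp_div_expSum u (Finset.card_pos.mp (by omega : 0 < C.card))]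
      refine Finset.sum_congr rfl fun a ha => ?_
      rw [ih 0 _ (Nat.zero_le _) (hcard a ha), missProb, mul_one]
    | succ ℓ =>
      rw [sum_prPL_succ u C _ (C.erase i) (topSet n k i ℓ)ᶜ (Finset.erase_subset _ _)
        (by intro r hr; simp [mem_topSet_succ, hr]), missProb]
      refine Finset.sum_congr rfl fun a ha => ?_
      rw [ih ℓ _ (by omega) (hcard a (Finset.mem_of_mem_erase ha))]

theorem hitProb_eq {n k : ℕ} (u : Fin n → ℝ) (i : Fin n) {ℓ : ℕ} {C : Finset (Fin n)}
    (hℓ : ℓ ≤ k) (hC : k ≤ C.card) : hitProb n k u i ℓ C = 1 - missProb u i ℓ C := by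
  have htotal := sum_compl_topSet u i k 0 C (Nat.zero_le _) hC
  rw [topSet_zero, Finset.compl_empty, missProb] at htotal
  rw [← sum_compl_topSet u i k ℓ C hℓ hC, ← htotal, hitProb, eq_sub_iff_add_eq]
  exact Finset.sum_add_sum_compl _ _

theorem hitProb_nonneg {n k : ℕ} (u : Fin n → ℝ) (i : Fin n) (ℓ : ℕ) (C : Finset (Fin n)) :
    0 ≤ hitProb n k u i ℓ C :=
  Finset.sum_nonneg fun r _ => prPL_nonneg u r C

theorem hitProb_of_notMem {n k : ℕ} (u : Fin n → ℝ) {i : Fin n} (ℓ : ℕ) {C : Finset (Fin n)}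
    (hi : i ∉ C) : hitProb n k u i ℓ C = 0 := by
  refine Finset.sum_eq_zero fun r hr => ?_
  obtain ⟨t, -, ht⟩ := mem_topSet.mp hr
  exact prPL_eq_zero u r (t := t) (ht ▸ hi)

theorem missProb_nonneg {n : ℕ} (u : Fin n → ℝ) (i : Fin n) (ℓ : ℕ) (C : Finset (Fin n)) :
    0 ≤ missProb u i ℓ C := by
  induction ℓ generalizing C with
  | zero => exact zero_le_one
  | succ ℓ ih =>
    exact Finset.sum_nonneg fun a _ =>
      mul_nonneg (div_nonneg (Real.exp_pos _).le (expSum_nonneg u C)) (ih _)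

theorem missProb_le_one {n : ℕ} (u : Fin n → ℝ) (i : Fin n) (ℓ : ℕ) (C : Finset (Fin n)) :
    missProb u i ℓ C ≤ 1 := by
  induction ℓ generalizing C with
  | zero => exact le_rfl
  | succ ℓ ih =>
    have hq : ∀ a, 0 ≤ Real.exp (u a) / expSum u C := fun a =>
      div_nonneg (Real.exp_pos _).le (expSum_nonneg u C)
    calc missProb u i (ℓ + 1) C ≤ ∑ a ∈ C.erase i, Real.exp (u a) / expSum u C :=
          Finset.sum_le_sum fun a _ => mul_le_of_le_one_right (hq a) (ih _)
      _ ≤ ∑ a ∈ C, Real.exp (u a) / expSum u C :=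
          Finset.sum_le_sum_of_subset_of_nonneg (Finset.erase_subset _ _) fun a _ _ => hq a
      _ ≤ 1 := by
          rw [← Finset.sum_div]
          exact div_self_le_one _

theorem missProb_lt_one {n : ℕ} (u : Fin n → ℝ) {i : Fin n} {ℓ : ℕ} {C : Finset (Fin n)}
    (hℓ : 1 ≤ ℓ) (hi : i ∈ C) : missProb u i ℓ C < 1 := by
  obtain ⟨ℓ, rfl⟩ := Nat.exists_eq_add_of_le' hℓ
  have hS := expSum_pos u ⟨i, hi⟩
  calc missProb u i (ℓ + 1) C ≤ ∑ a ∈ C.erase i, Real.exp (u a) / expSum u C :=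
        Finset.sum_le_sum fun a _ => mul_le_of_le_one_right
          (div_nonneg (Real.exp_pos _).le hS.le) (missProb_le_one u i ℓ _)
    _ < ∑ a ∈ C, Real.exp (u a) / expSum u C := by
        rw [← Finset.add_sum_erase C _ hi]
        exact lt_add_of_pos_left _ (div_pos (Real.exp_pos _) hS)
    _ = 1 := sum_exp_div_expSum u ⟨i, hi⟩

theorem missProb_pos {n : ℕ} (u : Fin n → ℝ) {i : Fin n} {ℓ : ℕ} {C : Finset (Fin n)}
    (hi : i ∈ C) (hℓ : ℓ < C.card) : 0 < missProb u i ℓ C := by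
  induction ℓ generalizing C with
  | zero => exact zero_lt_one
  | succ ℓ ih =>
    refine Finset.sum_pos (fun a ha => ?_) ?_
    · obtain ⟨hai, haC⟩ := Finset.mem_erase.mp ha
      refine mul_pos (div_pos (Real.exp_pos _) (expSum_pos u ⟨i, hi⟩))
        (ih (Finset.mem_erase.mpr ⟨hai.symm, hi⟩) ?_)
      rw [Finset.card_erase_of_mem haC]; omega
    · rw [← Finset.card_pos, Finset.card_erase_of_mem hi]; omega

/-- Replacing `j` by an item `i` of larger utility lowers the probability of being missed. -/
theorem missProb_insert_le {n : ℕ} (u : Fin n → ℝ) {i j : Fin n} (hu : u j ≤ u i) (ℓ : ℕ)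
    {D : Finset (Fin n)} (hi : i ∉ D) (hj : j ∉ D) :
    missProb u i ℓ (insert i D) ≤ missProb u j ℓ (insert j D) := by
  induction ℓ generalizing D with
  | zero => exact le_rfl
  | succ ℓ ih =>
    have hS : expSum u (insert j D) ≤ expSum u (insert i D) := by
      rw [expSum, expSum, Finset.sum_insert hi, Finset.sum_insert hj]
      gcongr
    rw [missProb, missProb, Finset.erase_insert hi, Finset.erase_insert hj]
    refine Finset.sum_le_sum fun a ha => ?_
    have hia : i ≠ a := fun h => hi (h ▸ ha)
    have hja : j ≠ a := fun h => hj (h ▸ ha)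
    rw [Finset.erase_insert_of_ne hia, Finset.erase_insert_of_ne hja]
    have hpos : 0 < expSum u (insert j D) := expSum_pos u (Finset.insert_nonempty _ _)
    exact mul_le_mul (div_le_div_of_nonneg_left (Real.exp_pos _).le hpos hS)
      (ih (fun h => hi (Finset.mem_of_mem_erase h)) fun h => hj (Finset.mem_of_mem_erase h))
      (missProb_nonneg _ _ _ _) (div_nonneg (Real.exp_pos _).le hpos.le)

theorem missProb_succ_insert_insert {n : ℕ} (u : Fin n → ℝ) {i j : Fin n} (hij : i ≠ j) (ℓ : ℕ)
    {D : Finset (Fin n)} (hi : i ∉ D) (hj : j ∉ D) :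
    missProb u i (ℓ + 1) (insert i (insert j D)) =
      Real.exp (u j) / expSum u (insert i (insert j D)) * missProb u i ℓ (insert i D) +
      ∑ a ∈ D, Real.exp (u a) / expSum u (insert i (insert j D)) *
        missProb u i ℓ (insert i (insert j (D.erase a))) := by
  rw [missProb, Finset.erase_insert (by simp [hij, hi]), Finset.sum_insert hj,
    Finset.erase_insert_of_ne hij, Finset.erase_insert hj]
  congr 1
  refine Finset.sum_congr rfl fun a ha => ?_
  have hia : i ≠ a := fun h => hi (h ▸ ha)
  have hja : j ≠ a := fun h => hj (h ▸ ha)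
  rw [Finset.erase_insert_of_ne hia, Finset.erase_insert_of_ne hja]

/-- Among two considered items, the one of larger utility is missed less often. -/
theorem missProb_le_missProb {n : ℕ} (u : Fin n → ℝ) {i j : Fin n} (hij : i ≠ j)
    (hu : u j ≤ u i) (ℓ : ℕ) {D : Finset (Fin n)} (hi : i ∉ D) (hj : j ∉ D) :
    missProb u i ℓ (insert i (insert j D)) ≤ missProb u j ℓ (insert i (insert j D)) := by
  induction ℓ generalizing D with
  | zero => exact le_rfl
  | succ ℓ ih =>
    have hS := expSum_nonneg u (insert i (insert j D))
    have hswap : ∀ E : Finset (Fin n), insert i (insert j E) = insert j (insert i E) :=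
      fun E => Finset.insert_comm i j E
    have hj' := missProb_succ_insert_insert u hij.symm ℓ hj hi
    simp only [← hswap] at hj'
    rw [missProb_succ_insert_insert u hij ℓ hi hj, hj']
    refine add_le_add ?_ (Finset.sum_le_sum fun a _ => ?_)
    · exact mul_le_mul (div_le_div_of_nonneg_right (Real.exp_le_exp.mpr hu) hS)
        (missProb_insert_le u hu ℓ hi hj) (missProb_nonneg _ _ _ _)
        (div_nonneg (Real.exp_pos _).le hS)
    · exact mul_le_mul_of_nonneg_left
        (ih (fun h => hi (Finset.mem_of_mem_erase h)) fun h => hj (Finset.mem_of_mem_erase h))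
        (div_nonneg (Real.exp_pos _).le hS)

theorem missProb_lt_missProb {n : ℕ} (u : Fin n → ℝ) {i j : Fin n} (hij : i ≠ j)
    (hu : u j < u i) {ℓ : ℕ} (hℓ : 1 ≤ ℓ) {D : Finset (Fin n)} (hi : i ∉ D) (hj : j ∉ D)
    (hD : ℓ < (insert i (insert j D)).card) :
    missProb u i ℓ (insert i (insert j D)) < missProb u j ℓ (insert i (insert j D)) := by
  obtain ⟨ℓ, rfl⟩ := Nat.exists_eq_add_of_le' hℓ
  have hS : 0 < expSum u (insert i (insert j D)) := expSum_pos u (Finset.insert_nonempty _ _)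
  have hswap : ∀ E : Finset (Fin n), insert i (insert j E) = insert j (insert i E) :=
    fun E => Finset.insert_comm i j E
  have hj' := missProb_succ_insert_insert u hij.symm ℓ hj hi
  simp only [← hswap] at hj'
  rw [missProb_succ_insert_insert u hij ℓ hi hj, hj']
  rw [Finset.card_insert_of_notMem (by simp [hij, hi])] at hD
  refine add_lt_add_of_lt_of_le ?_ (Finset.sum_le_sum fun a _ => ?_)
  · exact mul_lt_mul (div_lt_div_of_pos_right (Real.exp_lt_exp.mpr hu) hS)
      (missProb_insert_le u hu.le ℓ hi hj)
      (missProb_pos u (Finset.mem_insert_self _ _) (by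
        rw [Finset.card_insert_of_notMem hi]
        rw [Finset.card_insert_of_notMem hj] at hD
        omega))
      (div_nonneg (Real.exp_pos _).le hS.le)
  · exact mul_le_mul_of_nonneg_left
      (missProb_le_missProb u hij hu.le ℓ (fun h => hi (Finset.mem_of_mem_erase h))
        fun h => hj (Finset.mem_of_mem_erase h))
      (div_nonneg (Real.exp_pos _).le hS.le)

noncomputable section

/-- Unnormalized PL+C probability that `i` is in one of the top `ℓ` positions. -/
def hitMass (n k : ℕ) (u p : Fin n → ℝ) (i : Fin n) (ℓ : ℕ) : ℝ :=
  ∑ C : Finset (Fin n), if k ≤ C.card then considerWeight n p C * hitProb n k u i ℓ C else 0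

/-- The weight of `D` as a consideration set within `E`. -/
def restrictedWeight {n : ℕ} (p : Fin n → ℝ) (E D : Finset (Fin n)) : ℝ :=
  (∏ a ∈ D, p a) * ∏ b ∈ E \ D, (1 - p b)

end

theorem prPLCset_topSet (n k : ℕ) (u p : Fin n → ℝ) (i : Fin n) (ℓ : ℕ) :
    prPLCset n k u p (topSet n k i ℓ) = hitMass n k u p i ℓ / zConst n k p := by
  unfold prPLCset prPLC hitMass
  rw [Finset.sum_comm, Finset.sum_div]
  refine Finset.sum_congr rfl fun C _ => ?_
  rw [← Finset.mul_sum, ← hitProb, prC]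
  split_ifs
  · ring
  · simp

theorem considerWeight_nonneg {n : ℕ} {p : Fin n → ℝ} (hp : ∀ a, 0 < p a ∧ p a ≤ 1)
    (C : Finset (Fin n)) : 0 ≤ considerWeight n p C :=
  mul_nonneg (Finset.prod_nonneg fun a _ => (hp a).1.le)
    (Finset.prod_nonneg fun a _ => sub_nonneg.mpr (hp a).2)

theorem considerWeight_univ_pos {n : ℕ} {p : Fin n → ℝ} (hp : ∀ a, 0 < p a ∧ p a ≤ 1) :
    0 < considerWeight n p Finset.univ := by
  rw [considerWeight, Finset.compl_univ, Finset.prod_empty, mul_one]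
  exact Finset.prod_pos fun a _ => (hp a).1

theorem zConst_pos {n k : ℕ} (hkn : k ≤ n) {p : Fin n → ℝ} (hp : ∀ a, 0 < p a ∧ p a ≤ 1) :
    0 < zConst n k p :=
  Finset.sum_pos' (fun C _ => considerWeight_nonneg hp C)
    ⟨Finset.univ, by simpa using hkn, considerWeight_univ_pos hp⟩

theorem hitProb_pos {n k ℓ : ℕ} (u : Fin n → ℝ) {i : Fin n} {C : Finset (Fin n)} (hi : i ∈ C)
    (hℓ : 1 ≤ ℓ) (hℓk : ℓ ≤ k) (hC : k ≤ C.card) : 0 < hitProb n k u i ℓ C := by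
  rw [hitProb_eq u i hℓk hC]
  exact sub_pos.mpr (missProb_lt_one u hℓ hi)

theorem hitMass_pos {n k ℓ : ℕ} (u : Fin n → ℝ) {p : Fin n → ℝ} (hp : ∀ a, 0 < p a ∧ p a ≤ 1)
    (i : Fin n) (hℓ : 1 ≤ ℓ) (hℓk : ℓ ≤ k) (hkn : k ≤ n) : 0 < hitMass n k u p i ℓ := by
  refine Finset.sum_pos' (fun C _ => ?_) ⟨Finset.univ, Finset.mem_univ _, ?_⟩
  · split_ifs
    · exact mul_nonneg (considerWeight_nonneg hp C) (hitProb_nonneg u i ℓ C)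
    · exact le_rfl
  · have hcard : k ≤ (Finset.univ : Finset (Fin n)).card := by simpa using hkn
    rw [if_pos hcard]
    exact mul_pos (considerWeight_univ_pos hp) (hitProb_pos u (Finset.mem_univ i) hℓ hℓk hcard)

theorem considerWeight_insert {n : ℕ} (p : Fin n → ℝ) {i j : Fin n} (hij : i ≠ j)
    {D : Finset (Fin n)} (hi : i ∉ D) (hj : j ∉ D) :
    considerWeight n p (insert i D) =
      p i * (1 - p j) * restrictedWeight p ({i, j}ᶜ) D := by
  have hc : (insert i D)ᶜ = insert j (({i, j} : Finset (Fin n))ᶜ \ D) := by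
    ext a
    simp only [Finset.mem_compl, Finset.mem_insert, Finset.mem_sdiff, Finset.mem_singleton]
    by_cases haj : a = j
    · subst haj; simp [hij.symm, hj]
    · simp [haj]
  rw [considerWeight, restrictedWeight, hc, Finset.prod_insert hi, Finset.prod_insert (by simp)]
  ring

theorem considerWeight_insert_insert {n : ℕ} (p : Fin n → ℝ) {i j : Fin n} (hij : i ≠ j)
    {D : Finset (Fin n)} (hi : i ∉ D) (hj : j ∉ D) :
    considerWeight n p (insert i (insert j D)) =
      p i * p j * restrictedWeight p ({i, j}ᶜ) D := by
  have hc : (insert i (insert j D))ᶜ = ({i, j} : Finset (Fin n))ᶜ \ D := by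
    ext a
    simp only [Finset.mem_compl, Finset.mem_insert, Finset.mem_sdiff, Finset.mem_singleton]
    tauto
  rw [considerWeight, restrictedWeight, hc, Finset.prod_insert (by simp [hij, hi]),
    Finset.prod_insert hj]
  ring

theorem restrictedWeight_nonneg {n : ℕ} {p : Fin n → ℝ} (hp : ∀ a, 0 < p a ∧ p a ≤ 1)
    (E D : Finset (Fin n)) : 0 ≤ restrictedWeight p E D :=
  mul_nonneg (Finset.prod_nonneg fun a _ => (hp a).1.le)
    (Finset.prod_nonneg fun a _ => sub_nonneg.mpr (hp a).2)

theorem restrictedWeight_self_pos {n : ℕ} {p : Fin n → ℝ} (hp : ∀ a, 0 < p a ∧ p a ≤ 1)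
    (E : Finset (Fin n)) : 0 < restrictedWeight p E E := by
  rw [restrictedWeight, sdiff_self, Finset.bot_eq_empty, Finset.prod_empty, mul_one]
  exact Finset.prod_pos fun a _ => (hp a).1

noncomputable section

/-- Mass of the event that `i` is in the top `ℓ`, over sets considering both `i` and `j`, with the
factors of `i` and `j` removed. -/
def bothMass (n k : ℕ) (u p : Fin n → ℝ) (i j : Fin n) (ℓ : ℕ) : ℝ :=
  ∑ D ∈ (({i, j} : Finset (Fin n))ᶜ).powerset, if k ≤ D.card + 2 then
    restrictedWeight p ({i, j}ᶜ) D * hitProb n k u i ℓ (insert i (insert j D)) else 0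

/-- Mass of the event that `i` is in the top `ℓ`, over sets considering `i` but not `j`, with the
factors of `i` and `j` removed. -/
def onlyMass (n k : ℕ) (u p : Fin n → ℝ) (i j : Fin n) (ℓ : ℕ) : ℝ :=
  ∑ D ∈ (({i, j} : Finset (Fin n))ᶜ).powerset, if k ≤ D.card + 1 then
    restrictedWeight p ({i, j}ᶜ) D * hitProb n k u i ℓ (insert i D) else 0

end

theorem notMem_of_mem_powerset_pair_compl {n : ℕ} {i j : Fin n} {D : Finset (Fin n)}
    (hD : D ∈ (({i, j} : Finset (Fin n))ᶜ).powerset) : i ∉ D ∧ j ∉ D := by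
  rw [Finset.mem_powerset] at hD
  exact ⟨fun h => by simpa using hD h, fun h => by simpa using hD h⟩

theorem hitMass_eq {n k : ℕ} (u p : Fin n → ℝ) {i j : Fin n} (hij : i ≠ j) (ℓ : ℕ) :
    hitMass n k u p i ℓ =
      p i * p j * bothMass n k u p i j ℓ + p i * (1 - p j) * onlyMass n k u p i j ℓ := by
  have huniv : (Finset.univ : Finset (Finset (Fin n))) =
      (insert i (insert j (({i, j} : Finset (Fin n))ᶜ))).powerset := by
    rw [← Finset.powerset_univ]
    congr 1
    ext a
    simp only [Finset.mem_univ, Finset.mem_insert, Finset.mem_compl, Finset.mem_singleton]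
    tauto
  have hzero : ∑ C ∈ (insert j (({i, j} : Finset (Fin n))ᶜ)).powerset,
      (if k ≤ C.card then considerWeight n p C * hitProb n k u i ℓ C else 0) = 0 := by
    refine Finset.sum_eq_zero fun C hC => ?_
    have hi : i ∉ C := fun h => by simpa [hij] using Finset.mem_powerset.mp hC h
    rw [hitProb_of_notMem u ℓ hi, mul_zero, ite_self]
  rw [hitMass, huniv, Finset.sum_powerset_insert (by simp [hij]), hzero, zero_add,
    Finset.sum_powerset_insert (by simp), bothMass, onlyMass, Finset.mul_sum, Finset.mul_sum,
    add_comm]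
  congr 1
  · refine Finset.sum_congr rfl fun D hD => ?_
    obtain ⟨hi, hj⟩ := notMem_of_mem_powerset_pair_compl hD
    rw [Finset.card_insert_of_notMem (by simp [hij, hi]), Finset.card_insert_of_notMem hj,
      considerWeight_insert_insert p hij hi hj, mul_ite, mul_zero, ← mul_assoc]
  · refine Finset.sum_congr rfl fun D hD => ?_
    obtain ⟨hi, hj⟩ := notMem_of_mem_powerset_pair_compl hD
    rw [Finset.card_insert_of_notMem hi, considerWeight_insert p hij hi hj, mul_ite, mul_zero,
      ← mul_assoc]

theorem bothMass_le {n k ℓ : ℕ} (u : Fin n → ℝ) {p : Fin n → ℝ} (hp : ∀ a, 0 < p a ∧ p a ≤ 1)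
    {i j : Fin n} (hij : i ≠ j) (hu : u j ≤ u i) (hℓk : ℓ ≤ k) :
    bothMass n k u p j i ℓ ≤ bothMass n k u p i j ℓ := by
  rw [bothMass, bothMass, Finset.pair_comm j i]
  refine Finset.sum_le_sum fun D hD => ?_
  obtain ⟨hi, hj⟩ := notMem_of_mem_powerset_pair_compl hD
  split_ifs with h
  · have hcard : k ≤ (insert i (insert j D)).card := by
      rwa [Finset.card_insert_of_notMem (by simp [hij, hi]), Finset.card_insert_of_notMem hj]
    refine mul_le_mul_of_nonneg_left ?_ (restrictedWeight_nonneg hp _ _)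
    rw [Finset.insert_comm j i, hitProb_eq u j hℓk hcard, hitProb_eq u i hℓk hcard]
    exact sub_le_sub_left (missProb_le_missProb u hij hu ℓ hi hj) 1
  · exact le_rfl

theorem onlyMass_le {n k ℓ : ℕ} (u : Fin n → ℝ) {p : Fin n → ℝ} (hp : ∀ a, 0 < p a ∧ p a ≤ 1)
    {i j : Fin n} (hu : u j ≤ u i) (hℓk : ℓ ≤ k) :
    onlyMass n k u p j i ℓ ≤ onlyMass n k u p i j ℓ := by
  rw [onlyMass, onlyMass, Finset.pair_comm j i]
  refine Finset.sum_le_sum fun D hD => ?_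
  obtain ⟨hi, hj⟩ := notMem_of_mem_powerset_pair_compl hD
  split_ifs with h
  · refine mul_le_mul_of_nonneg_left ?_ (restrictedWeight_nonneg hp _ _)
    rw [hitProb_eq u j hℓk (by rwa [Finset.card_insert_of_notMem hj]),
      hitProb_eq u i hℓk (by rwa [Finset.card_insert_of_notMem hi])]
    exact sub_le_sub_left (missProb_insert_le u hu ℓ hi hj) 1
  · exact le_rfl

theorem bothMass_nonneg {n k ℓ : ℕ} (u : Fin n → ℝ) {p : Fin n → ℝ}
    (hp : ∀ a, 0 < p a ∧ p a ≤ 1) (i j : Fin n) : 0 ≤ bothMass n k u p i j ℓ := by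
  refine Finset.sum_nonneg fun D _ => ?_
  split_ifs
  · exact mul_nonneg (restrictedWeight_nonneg hp _ _) (hitProb_nonneg u _ _ _)
  · exact le_rfl

theorem card_pair_compl {n : ℕ} {i j : Fin n} (hij : i ≠ j) :
    (({i, j} : Finset (Fin n))ᶜ).card + 2 = n := by
  have h := Finset.card_add_card_compl ({i, j} : Finset (Fin n))
  rw [Finset.card_pair hij, Fintype.card_fin] at h
  omega

theorem onlyMass_pos {n k ℓ : ℕ} (u : Fin n → ℝ) {p : Fin n → ℝ} (hp : ∀ a, 0 < p a ∧ p a ≤ 1)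
    {i j : Fin n} (hij : i ≠ j) (hℓ : 1 ≤ ℓ) (hℓk : ℓ ≤ k) (hkn : k < n) :
    0 < onlyMass n k u p i j ℓ := by
  have hcard := card_pair_compl hij
  refine Finset.sum_pos' (fun D _ => ?_) ⟨{i, j}ᶜ, Finset.mem_powerset_self _, ?_⟩
  · split_ifs
    · exact mul_nonneg (restrictedWeight_nonneg hp _ _) (hitProb_nonneg u _ _ _)
    · exact le_rfl
  · rw [if_pos (by omega)]
    refine mul_pos (restrictedWeight_self_pos hp _)
      (hitProb_pos u (Finset.mem_insert_self _ _) hℓ hℓk ?_)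
    rw [Finset.card_insert_of_notMem (by simp)]
    omega

/-- When all items are ranked, the item of larger utility strictly dominates. -/
theorem hitMass_lt_of_full {n ℓ : ℕ} (u : Fin n → ℝ) {p : Fin n → ℝ}
    (hp : ∀ a, 0 < p a ∧ p a ≤ 1) {i j : Fin n} (hu : u j < u i) (hℓ : 1 ≤ ℓ) (hℓn : ℓ < n) :
    hitMass n n u p j ℓ < hitMass n n u p i ℓ := by
  have hij : i ≠ j := fun h => by simp [h] at hu
  have hmass : ∀ a, hitMass n n u p a ℓ =
      considerWeight n p Finset.univ * hitProb n n u a ℓ Finset.univ := by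
    intro a
    rw [hitMass, Finset.sum_eq_single Finset.univ]
    · simp
    · intro C _ hC
      have hlt := (Finset.card_lt_iff_ne_univ C).mpr hC
      rw [Fintype.card_fin] at hlt
      rw [if_neg (by omega)]
    · simp
  have huniv : (Finset.univ : Finset (Fin n)) =
      insert i (insert j (({i, j} : Finset (Fin n))ᶜ)) := by
    ext a
    simp only [Finset.mem_univ, Finset.mem_insert, Finset.mem_compl, Finset.mem_singleton]
    tauto
  have hcard : (Finset.univ : Finset (Fin n)).card = n := by simp
  rw [hmass, hmass, hitProb_eq u j hℓn.le hcard.ge, hitProb_eq u i hℓn.le hcard.ge]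
  refine mul_lt_mul_of_pos_left (sub_lt_sub_left ?_ 1) (considerWeight_univ_pos hp)
  rw [huniv]
  exact missProb_lt_missProb u hij hu hℓ (by simp) (by simp) (by rw [← huniv, hcard]; exact hℓn)

theorem consider_gap (n k ℓ : ℕ) (u p : Fin n → ℝ) (i j : Fin n)
    (hp : ∀ a, 0 < p a ∧ p a ≤ 1) (hu : u i > u j)
    (hℓ : 1 ≤ ℓ) (hℓk : ℓ ≤ k) (hkn : k ≤ n) (hℓn : ℓ < n)
    (c : ℝ)
    (hc : c = prPLCset n k u p (topSet n k i ℓ) / prPLCset n k u p (topSet n k j ℓ))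
    (hc1 : c ≤ 1) :
    p i * (1 - p j) ≤ c * (p j * (1 - p i)) := by
  have hij : i ≠ j := fun h => by simp [h] at hu
  have hi := hitMass_pos u hp i hℓ hℓk hkn
  have hj := hitMass_pos u hp j hℓ hℓk hkn
  rw [prPLCset_topSet, prPLCset_topSet, div_div_div_cancel_right₀ (zConst_pos hkn hp).ne'] at hc
  have hc0 : 0 < c := hc ▸ div_pos hi hj
  have hmul : hitMass n k u p i ℓ = c * hitMass n k u p j ℓ := by
    rw [hc, div_mul_cancel₀ _ hj.ne']
  rcases hkn.lt_or_eq with hlt | rfl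
  · rw [hitMass_eq u p hij, hitMass_eq u p hij.symm] at hmul
    have hA := bothMass_le (k := k) u hp hij hu.le hℓk
    have hA0 := bothMass_nonneg (k := k) (ℓ := ℓ) u hp j i
    have hB := onlyMass_le (k := k) u hp hu.le hℓk
    have hBpos := onlyMass_pos u hp hij hℓ hℓk hlt
    have hpp : 0 < p i * p j := mul_pos (hp i).1 (hp j).1
    have hboth : c * (p i * p j * bothMass n k u p j i ℓ) ≤
        p i * p j * bothMass n k u p i j ℓ :=
      (mul_le_of_le_one_left (mul_nonneg hpp.le hA0) hc1).trans
        (mul_le_mul_of_nonneg_left hA hpp.le)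
    have hcoef : 0 ≤ c * (p j * (1 - p i)) :=
      mul_nonneg hc0.le (mul_nonneg (hp j).1.le (sub_nonneg.mpr (hp i).2))
    have honly := mul_le_mul_of_nonneg_left hB hcoef
    refine le_of_mul_le_mul_right ?_ hBpos
    linarith
  · have hfull := hitMass_lt_of_full u hp hu hℓ hℓn
    have hle := mul_le_of_le_one_left hj.le hc1
    linarith
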